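/- For each $m \geq 1$ let $B_1, \ldots, B_m$ be independent Bernoulli random variables with $\Pr(B_k = 1) = 1/k$, and set $X = B_1 + \cdots + B_m$. Then there is a constant $K > 0$ such that for all sufficiently large $m$, $\Pr\bigl(X > m/(\ln m)^3\bigr) \leq K \exp\bigl(-m/(\ln m)^2 + 7 m \,(\ln\ln m)/(\ln m)^3\bigr)$; in particular $\Pr\bigl(X > m/(\ln m)^3\bigr) \to 0$ as $m \to \infty$. -/

import Mathlib

open MeasureTheory ProbabilityTheory Filter

/-!
For independent `[0, 1]`-valued summands whose means add up to `p`, Chernoff's method gives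
`Pr(X ≥ ε) ≤ exp(-tε + (eᵗ - 1) p)`. Put `L = ln m`, `ℓ = ln ln m`, and take `ε = m / L³` and
`eᵗ = m / L⁴ = ε / L`. Then `-tε = -m / L² + 4εℓ`, and `(eᵗ - 1) p ≤ 3εℓ` as soon as `p ≤ 3Lℓ`,
whence the constant `7 = 4 + 3`. For the summands of the lemma `p` is the `m`-th harmonic number,
which is only about `L`.
-/

section Chernoff

variable {Ω : Type*} [MeasurableSpace Ω] {μ : Measure Ω}

theorem exp_mul_le_one_add_mul {x : ℝ} (hx : x ∈ Set.Icc (0 : ℝ) 1) (t : ℝ) :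
    Real.exp (t * x) ≤ 1 + (Real.exp t - 1) * x := by
  have h := convexOn_exp.2 (Set.mem_univ 0) (Set.mem_univ t) (sub_nonneg.2 hx.2) hx.1
    (sub_add_cancel 1 x)
  simp only [smul_eq_mul, mul_zero, zero_add, Real.exp_zero, mul_one] at h
  rw [mul_comm t x]
  linarith

theorem mgf_le_exp_of_mem_Icc [IsProbabilityMeasure μ] {X : Ω → ℝ} (hX : AEMeasurable X μ)
    (hX01 : ∀ᵐ ω ∂μ, X ω ∈ Set.Icc (0 : ℝ) 1) (t : ℝ) :
    mgf X μ t ≤ Real.exp ((Real.exp t - 1) * μ[X]) := by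
  have hint : Integrable (fun ω ↦ (Real.exp t - 1) * X ω) μ :=
    (Integrable.of_mem_Icc 0 1 hX hX01).const_mul _
  calc mgf X μ t ≤ ∫ ω, 1 + (Real.exp t - 1) * X ω ∂μ :=
        integral_mono_ae (integrable_exp_mul_of_mem_Icc hX hX01) ((integrable_const 1).add hint)
          (hX01.mono fun _ h ↦ exp_mul_le_one_add_mul h t)
    _ = (Real.exp t - 1) * μ[X] + 1 := by
        rw [integral_add (integrable_const 1) hint, integral_const_mul, integral_const,
          probReal_univ, one_smul, add_comm]
    _ ≤ Real.exp ((Real.exp t - 1) * μ[X]) := Real.add_one_le_exp _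

theorem measureReal_le_sum_le_exp_of_mem_Icc {ι : Type*} [Fintype ι] {X : ι → Ω → ℝ}
    (hindep : iIndepFun X μ) (hX : ∀ i, AEMeasurable (X i) μ)
    (hX01 : ∀ i, ∀ᵐ ω ∂μ, X i ω ∈ Set.Icc (0 : ℝ) 1) (ε : ℝ) {t : ℝ} (ht : 0 ≤ t) :
    μ.real {ω | ε ≤ ∑ i, X i ω} ≤ Real.exp (-t * ε + (Real.exp t - 1) * ∑ i, μ[X i]) := by
  have := hindep.isProbabilityMeasure
  have hmem : ∀ᵐ ω ∂μ, (∑ i, X i) ω ∈ Set.Icc (0 : ℝ) (Fintype.card ι) := by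
    filter_upwards [ae_all_iff.2 hX01] with ω h
    rw [Finset.sum_apply]
    refine ⟨Finset.sum_nonneg fun i _ ↦ (h i).1, ?_⟩
    simpa using Finset.sum_le_card_nsmul Finset.univ (X · ω) 1 fun i _ ↦ (h i).2
  have hint := integrable_exp_mul_of_mem_Icc (t := t)
    (Finset.aemeasurable_sum Finset.univ fun i _ ↦ hX i) hmem
  calc μ.real {ω | ε ≤ ∑ i, X i ω} = μ.real {ω | ε ≤ (∑ i, X i) ω} := by
        simp only [Finset.sum_apply]
    _ ≤ Real.exp (-t * ε) * ∏ i, mgf (X i) μ t := by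
        rw [← hindep.mgf_sum₀ hX]
        exact measure_ge_le_exp_mul_mgf ε ht hint
    _ ≤ Real.exp (-t * ε) * ∏ i, Real.exp ((Real.exp t - 1) * μ[X i]) := by
        gcongr with i
        · exact fun _ _ ↦ mgf_nonneg
        · exact mgf_le_exp_of_mem_Icc (hX i) (hX01 i) t
    _ = Real.exp (-t * ε + (Real.exp t - 1) * ∑ i, μ[X i]) := by
        rw [← Real.exp_sum, ← Finset.mul_sum, ← Real.exp_add]

theorem integral_ite_one_zero {p : Ω → Prop} [DecidablePred p] (hp : MeasurableSet {ω | p ω}) :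
    ∫ ω, (if p ω then (1 : ℝ) else 0) ∂μ = μ.real {ω | p ω} := by
  rw [← integral_indicator_one hp]
  simp only [Set.indicator_apply, Set.mem_ofPred_eq, Pi.one_apply]

end Chernoff

theorem tendsto_div_log_pow_atTop (n : ℕ) :
    Tendsto (fun x : ℝ ↦ x / Real.log x ^ n) atTop atTop := by
  refine ((Real.tendsto_exp_div_pow_atTop n).comp Real.tendsto_log_atTop).congr' ?_
  filter_upwards [eventually_gt_atTop 0] with x hx
  rw [Function.comp_apply, Real.exp_log hx]

theorem tendsto_chernoff_exponent_atBot :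
    Tendsto (fun x : ℝ ↦ -x / Real.log x ^ 2 + 7 * x * Real.log (Real.log x) / Real.log x ^ 3)
      atTop atBot := by
  have hratio : Tendsto (fun x : ℝ ↦ 1 - 7 * (Real.log (Real.log x) / Real.log x)) atTop
      (nhds 1) := by
    simpa using ((Real.isLittleO_log_id_atTop.tendsto_div_nhds_zero.comp
      Real.tendsto_log_atTop).const_mul 7).const_sub 1
  refine (tendsto_neg_atTop_atBot.comp
    ((tendsto_div_log_pow_atTop 2).atTop_mul_pos one_pos hratio)).congr' ?_
  filter_upwards [Real.tendsto_log_atTop.eventually_gt_atTop 0] with x hx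
  simp only [Function.comp_apply]
  field_simp
  ring

theorem chernoff_exponent_le {x p : ℝ} (hL : 1 ≤ Real.log x) (hz : 1 ≤ x / Real.log x ^ 4)
    (hp : p ≤ 3 * Real.log x * Real.log (Real.log x)) :
    -Real.log (x / Real.log x ^ 4) * (x / Real.log x ^ 3) + (x / Real.log x ^ 4 - 1) * p ≤
      -x / Real.log x ^ 2 + 7 * x * Real.log (Real.log x) / Real.log x ^ 3 := by
  have hL0 : 0 < Real.log x := one_pos.trans_le hL
  have hx : x ≠ 0 := by
    rintro rfl
    norm_num at hL
  rw [Real.log_div hx (by positivity), Real.log_pow, Nat.cast_ofNat]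
  have hl : 0 ≤ Real.log (Real.log x) := Real.log_nonneg hL
  generalize Real.log (Real.log x) = l at *
  generalize Real.log x = L at *
  calc -(L - 4 * l) * (x / L ^ 3) + (x / L ^ 4 - 1) * p
      ≤ -(L - 4 * l) * (x / L ^ 3) + (x / L ^ 4 - 1) * (3 * L * l) := by
        gcongr
    _ ≤ -(L - 4 * l) * (x / L ^ 3) + x / L ^ 4 * (3 * L * l) := by
        gcongr
        exact sub_le_self _ zero_le_one
    _ = -x / L ^ 2 + 7 * x * l / L ^ 3 := by
        field_simp
        ring

theorem eventually_sum_one_div_le_log_mul_log_log :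
    ∀ᶠ m : ℕ in atTop, ∑ k : Fin m, (1 / ((k : ℕ) + 1) : ℝ) ≤
      3 * Real.log m * Real.log (Real.log m) := by
  have hlog := Real.tendsto_log_atTop.comp (tendsto_natCast_atTop_atTop (R := ℝ))
  filter_upwards [hlog.eventually_ge_atTop 1,
    (Real.tendsto_log_atTop.comp hlog).eventually_ge_atTop 1] with m hL hl
  simp only [Function.comp_apply] at hL hl
  calc ∑ k : Fin m, (1 / ((k : ℕ) + 1) : ℝ) = (harmonic m : ℝ) := by
        rw [Fin.sum_univ_eq_sum_range fun k : ℕ ↦ (1 / ((k : ℝ) + 1)), harmonic]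
        simp
    _ ≤ 1 + Real.log m := harmonic_le_one_add_log m
    _ ≤ 3 * Real.log m * 1 := by linarith
    _ ≤ 3 * Real.log m * Real.log (Real.log m) := by gcongr

theorem lemma10_third_estimate_general
    {Ω ι : ℕ → Type*} [∀ m, MeasurableSpace (Ω m)] [∀ m, Fintype (ι m)]
    (μ : ∀ m, Measure (Ω m)) (X : ∀ m, ι m → Ω m → ℝ)
    (hX : ∀ m i, AEMeasurable (X m i) (μ m))
    (hX01 : ∀ m i, ∀ᵐ ω ∂μ m, X m i ω ∈ Set.Icc (0 : ℝ) 1)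
    (hindep : ∀ m, iIndepFun (X m) (μ m))
    (hmean : ∀ᶠ m : ℕ in atTop,
      ∑ i, (μ m)[X m i] ≤ 3 * Real.log m * Real.log (Real.log m)) :
    (∀ᶠ m : ℕ in atTop, (μ m).real {ω | (m : ℝ) / Real.log m ^ 3 < ∑ i, X m i ω} ≤
      Real.exp (-(m : ℝ) / Real.log m ^ 2 +
        7 * m * Real.log (Real.log m) / Real.log m ^ 3)) ∧
    Tendsto (fun m : ℕ ↦ (μ m).real {ω | (m : ℝ) / Real.log m ^ 3 < ∑ i, X m i ω})
      atTop (nhds 0) := by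
  have hcast := tendsto_natCast_atTop_atTop (R := ℝ)
  have hbound : ∀ᶠ m : ℕ in atTop,
      (μ m).real {ω | (m : ℝ) / Real.log m ^ 3 < ∑ i, X m i ω} ≤
        Real.exp (-(m : ℝ) / Real.log m ^ 2 +
          7 * m * Real.log (Real.log m) / Real.log m ^ 3) := by
    filter_upwards [hmean, (Real.tendsto_log_atTop.comp hcast).eventually_ge_atTop 1,
      ((tendsto_div_log_pow_atTop 4).comp hcast).eventually_ge_atTop 1] with m hp hL hz
    simp only [Function.comp_apply] at hL hz
    have := (hindep m).isProbabilityMeasure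
    calc (μ m).real {ω | (m : ℝ) / Real.log m ^ 3 < ∑ i, X m i ω}
        ≤ (μ m).real {ω | (m : ℝ) / Real.log m ^ 3 ≤ ∑ i, X m i ω} :=
          measureReal_mono (Set.ofPred_subset_ofPred.2 fun _ ↦ le_of_lt)
      _ ≤ _ := measureReal_le_sum_le_exp_of_mem_Icc (hindep m) (hX m) (hX01 m) _
          (Real.log_nonneg hz)
      _ ≤ _ := by
          rw [Real.exp_log (one_pos.trans_le hz)]
          exact Real.exp_le_exp.2 (chernoff_exponent_le hL hz hp)
  exact ⟨hbound, squeeze_zero' (Eventually.of_forall fun _ ↦ measureReal_nonneg) hbound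
    (Real.tendsto_exp_atBot.comp (tendsto_chernoff_exponent_atBot.comp hcast))⟩

/-- **Lemma 10, third estimate.** For each `m` let `B 1, …, B m` be independent
Bernoulli random variables with `Pr(B k = 1) = 1/k` and let
`X = B 1 + ⋯ + B m`.  Then there is a constant `K > 0` such that for all
sufficiently large `m`,
`Pr(X > m/(ln m)³) ≤ K exp(-m/(ln m)² + 7 m (ln ln m)/(ln m)³)`; in particular
`Pr(X > m/(ln m)³) → 0` as `m → ∞`. -/
theorem lemma10_third_estimate
    (Ω : ℕ → Type*) [∀ m, MeasurableSpace (Ω m)]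
    (μ : ∀ m, Measure (Ω m)) [∀ m, IsProbabilityMeasure (μ m)]
    (B : ∀ m, Fin m → Ω m → Bool)
    (hmeas : ∀ m k, Measurable (B m k))
    (hindep : ∀ m, iIndepFun (B m) (μ m))
    (hbern : ∀ m, ∀ k : Fin m, ((μ m) {ω | B m k ω = true}).toReal = 1 / ((k : ℕ) + 1)) :
    (∃ K : ℝ, 0 < K ∧ ∃ m₀ : ℕ, ∀ m : ℕ, m₀ ≤ m →
      ((μ m) {ω | (m : ℝ) / (Real.log m) ^ 3 <
          ((∑ k : Fin m, if B m k ω then 1 else 0 : ℕ) : ℝ)}).toReal ≤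
        K * Real.exp (-(m : ℝ) / (Real.log m) ^ 2 +
          7 * m * Real.log (Real.log m) / (Real.log m) ^ 3)) ∧
    Tendsto (fun m : ℕ =>
        ((μ m) {ω | (m : ℝ) / (Real.log m) ^ 3 <
          ((∑ k : Fin m, if B m k ω then 1 else 0 : ℕ) : ℝ)}).toReal)
      atTop (nhds 0) := by
  have hmean (m : ℕ) (k : Fin m) :
      ∫ ω, (if B m k ω then (1 : ℝ) else 0) ∂μ m = 1 / ((k : ℕ) + 1) :=
    (integral_ite_one_zero (hmeas m k (measurableSet_singleton true))).trans (hbern m k)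
  have hvalue : Measurable fun b : Bool ↦ if b then (1 : ℝ) else 0 := measurable_of_countable _
  have h := lemma10_third_estimate_general μ (fun m k ω ↦ if B m k ω then (1 : ℝ) else 0)
    (fun m k ↦ (hvalue.comp (hmeas m k)).aemeasurable)
    (fun m k ↦ Eventually.of_forall fun ω ↦ by split_ifs <;> simp)
    (fun m ↦ (hindep m).comp _ fun _ ↦ hvalue)
    (by simpa only [hmean] using eventually_sum_one_div_le_log_mul_log_log)
  push_cast
  exact ⟨⟨1, one_pos, by simpa only [one_mul, measureReal_def] using eventually_atTop.1 h.1⟩, h.2⟩
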